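/- Let ω = ω(n) be any function of n with ω(n) → ∞ as n→∞. Then with high probability there is no chord c of the random oriented chord diagram D_n with length ℓ(c) ≥ ω(n) whose strong component in the directed intersection graph of D_n consists of c alone (i.e., no other chord d satisfies that c and d are mutually reachable by directed paths). -/

import Mathlib

open scoped Classical
open Finset Filter

/-- A chord diagram of size `n`: a fixed-point-free involution of the `2n`
endpoints `0, 1, …, 2n-1` (endpoint `i` here corresponds to the label `i+1`). -/
abbrev ChordDiagram (n : ℕ) :=
  {f : Fin (2*n) → Fin (2*n) // (∀ i, f (f i) = i) ∧ ∀ i, f i ≠ i}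

/-- `c` lies strictly between `a` and `b`. -/
def Between {m : ℕ} (a b c : Fin m) : Prop := min a b < c ∧ c < max a b

/-- The chord of `C` containing endpoint `x` crosses the chord containing endpoint `u`:
exactly one of the two endpoints `u`, `C u` lies strictly between `x` and `C x`. -/
def Crosses {n : ℕ} (C : ChordDiagram n) (x u : Fin (2*n)) : Prop :=
  Xor' (Between x (C.1 x) u) (Between x (C.1 x) (C.1 u))

/-- Uniform probability of an event over all chord diagrams of size `n`. -/
noncomputable def prob (n : ℕ) (E : ChordDiagram n → Prop) : ℝ :=
  ((Finset.univ.filter E).card : ℝ) / ((Finset.univ : Finset (ChordDiagram n)).card : ℝ)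

/-- The degree of the chord of `C` containing endpoint `x`: the number of chords
crossing it (each chord counted once via its smaller endpoint). -/
noncomputable def chordDegree {n : ℕ} (C : ChordDiagram n) (x : Fin (2*n)) : ℕ :=
  (Finset.univ.filter fun u => u < C.1 u ∧ Crosses C x u).card

/-- The length of the chord of `C` containing endpoint `x`: the number of endpoints
on the smaller of the two arcs it determines. -/
def chordLength {n : ℕ} (C : ChordDiagram n) (x : Fin (2*n)) : ℕ :=
  min (max (x:ℕ) (C.1 x : ℕ) - min (x:ℕ) (C.1 x : ℕ) - 1)
      (2*n - (max (x:ℕ) (C.1 x : ℕ) - min (x:ℕ) (C.1 x : ℕ)) - 1)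

/-- Degree of the chord containing endpoint `1` (index `0`). -/
noncomputable def degreeC1 (n : ℕ) (C : ChordDiagram n) : ℕ :=
  if h : 0 < n then chordDegree C ⟨0, by omega⟩ else 0

/-- Length of the chord containing endpoint `1` (index `0`). -/
noncomputable def lengthC1 (n : ℕ) (C : ChordDiagram n) : ℕ :=
  if h : 0 < n then chordLength C ⟨0, by omega⟩ else 0

/-- Membership in the component (w.r.t. the crossing relation) of the chord
containing the root endpoint. -/
def InRootComponent {n : ℕ} (C : ChordDiagram n) (root x : Fin (2*n)) : Prop :=
  x = root ∨ x = C.1 root ∨ Relation.ReflTransGen (fun a b => Crosses C a b) root x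

/-- The chord containing `x` is simple: it joins two (cyclically) consecutive endpoints. -/
def IsSimple {n : ℕ} (C : ChordDiagram n) (x : Fin (2*n)) : Prop :=
  (C.1 x : ℕ) = ((x : ℕ) + 1) % (2*n) ∨ (x : ℕ) = ((C.1 x : ℕ) + 1) % (2*n)

/-- `C` is monolithic (with respect to `root`): every chord not in the root
component is simple, and no two simple chords are next to each other. -/
def Monolithic {n : ℕ} (C : ChordDiagram n) (root : Fin (2*n)) : Prop :=
  (∀ x : Fin (2*n), ¬ InRootComponent C root x → IsSimple C x) ∧
  ¬ ∃ i : Fin (2*n), (C.1 i : ℕ) = ((i : ℕ) + 1) % (2*n) ∧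
      ∃ j : Fin (2*n), (j : ℕ) = ((i : ℕ) + 2) % (2*n) ∧ (C.1 j : ℕ) = ((i : ℕ) + 3) % (2*n)

/-- `L_j`: the number of chords of length `j` in `C`. -/
noncomputable def lengthCount (n : ℕ) (j : ℕ) (C : ChordDiagram n) : ℕ :=
  (Finset.univ.filter fun x : Fin (2*n) => x < C.1 x ∧ chordLength C x = j).card

/-- The endpoints of chords of `C` of length at least `k`. -/
noncomputable def lenAtLeast (n k : ℕ) (C : ChordDiagram n) : Finset (Fin (2*n)) :=
  Finset.univ.filter fun x => k ≤ chordLength C x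

/-- The number of chords with endpoints in `S` crossing the chord containing `x`. -/
noncomputable def degreeIn {n : ℕ} (C : ChordDiagram n) (S : Finset (Fin (2*n)))
    (x : Fin (2*n)) : ℕ :=
  (S.filter fun u => u < C.1 u ∧ Crosses C x u).card

/-- `S` (a chord-closed set of endpoints) is a set of chords each crossing at
least `k` other chords of `S`. -/
def IsCore {n : ℕ} (C : ChordDiagram n) (k : ℕ) (S : Finset (Fin (2*n))) : Prop :=
  (∀ x ∈ S, C.1 x ∈ S) ∧ ∀ x ∈ S, k ≤ degreeIn C S x

/-- The `k`-core: the union of all sets of chords in which every chord crosses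
at least `k` other chords of the set. -/
noncomputable def kCore (n k : ℕ) (C : ChordDiagram n) : Finset (Fin (2*n)) :=
  Finset.univ.filter fun x => ∃ S : Finset (Fin (2*n)), IsCore C k S ∧ x ∈ S

/-- The number of chords in the `k`-core of `C`. -/
noncomputable def kCoreSize (n k : ℕ) (C : ChordDiagram n) : ℕ :=
  ((kCore n k C).filter fun x => x < C.1 x).card

/-- `Z_k`: the number of chords of length strictly less than `k`. -/
noncomputable def shortCount (n k : ℕ) (C : ChordDiagram n) : ℕ :=
  (Finset.univ.filter fun x : Fin (2*n) => x < C.1 x ∧ chordLength C x < k).card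

/-- `C` contains a balanced clique of size `m`: a set of `m` pairwise crossing
chords with exactly one endpoint in each of the `2m` blocks of length `⌊n/m⌋`. -/
def HasBalancedClique (n m : ℕ) (C : ChordDiagram n) : Prop :=
  ∃ S : Finset (Fin (2*n)),
    (∀ x ∈ S, C.1 x ∈ S) ∧
    (∀ x ∈ S, ∀ u ∈ S, u ≠ x → u ≠ C.1 x → Crosses C x u) ∧
    (∀ t : ℕ, 1 ≤ t → t ≤ 2*m →
      (S.filter fun x => (t-1) * (n/m) ≤ (x:ℕ) ∧ (x:ℕ) < t * (n/m)).card = 1)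

/-- An oriented chord diagram: a chord diagram together with auxiliary fair-coin
bits; the bit attached to a crossing pair of chords (indexed by their smaller
endpoints) decides which chord over-crosses the other. -/
abbrev OrientedChordDiagram (n : ℕ) := ChordDiagram n × (Fin (2*n) → Fin (2*n) → Bool)

/-- The smaller endpoint of the chord of `C` containing `x`. -/
def chordRep {n : ℕ} (C : ChordDiagram n) (x : Fin (2*n)) : Fin (2*n) := min x (C.1 x)

/-- In the oriented diagram `D`, the chord containing `x` crosses and
over-crosses the chord containing `u`. -/
def OverD {n : ℕ} (D : OrientedChordDiagram n) (x u : Fin (2*n)) : Prop :=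
  Crosses D.1 x u ∧
    ((chordRep D.1 x ≤ chordRep D.1 u ∧ D.2 (chordRep D.1 x) (chordRep D.1 u) = true) ∨
     (chordRep D.1 u < chordRep D.1 x ∧ D.2 (chordRep D.1 u) (chordRep D.1 x) = false))

/-- Uniform probability of an event over all oriented chord diagrams of size `n`
(this yields a uniformly random diagram with each crossing oriented by an
independent fair coin). -/
noncomputable def probD (n : ℕ) (E : OrientedChordDiagram n → Prop) : ℝ :=
  ((Finset.univ.filter E).card : ℝ) /
    ((Finset.univ : Finset (OrientedChordDiagram n)).card : ℝ)

/-- The chords (given by their endpoints in `S`) are strongly connected in the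
directed intersection graph of `D`, using only chords of `S`. -/
def StronglyConnectedIn {n : ℕ} (D : OrientedChordDiagram n) (S : Set (Fin (2*n))) : Prop :=
  ∀ c ∈ S, ∀ d ∈ S,
    Relation.ReflTransGen (fun a b => a ∈ S ∧ b ∈ S ∧ OverD D a b) c d

/-- The number of chords with both endpoints in the cyclic block
`{i, i+1, …, i+t-1}` (mod `2n`). -/
noncomputable def chordsInBlock (n : ℕ) (C : ChordDiagram n) (i t : ℕ) : ℕ :=
  (Finset.univ.filter fun x : Fin (2*n) => x < C.1 x ∧
    (∃ a < t, (x:ℕ) = (i + a) % (2*n)) ∧ (∃ a < t, ((C.1 x : ℕ)) = (i + a) % (2*n))).card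

/-- The chord of `x` reaches the chord of `u` in the directed intersection graph
(of the whole diagram); endpoints of the same chord represent the same vertex. -/
def ReachChord {n : ℕ} (D : OrientedChordDiagram n) (x u : Fin (2*n)) : Prop :=
  u = x ∨ u = D.1.1 x ∨ Relation.ReflTransGen (fun a b => OverD D a b) x u

/-- The chords of `x` and `u` lie in the same strong component. -/
def MutualReach {n : ℕ} (D : OrientedChordDiagram n) (x u : Fin (2*n)) : Prop :=
  ReachChord D x u ∧ ReachChord D u x

/-- The number of single-chord strong components of `D`. -/
noncomputable def singleCount (n : ℕ) (D : OrientedChordDiagram n) : ℕ :=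
  (Finset.univ.filter fun x : Fin (2*n) =>
    x < D.1.1 x ∧ ∀ u : Fin (2*n), u ≠ x → u ≠ D.1.1 x → ¬ MutualReach D x u).card

/-!
Fix a chord `c` with shorter arc `A` and longer arc `B`, and expose the partners of the points of
`A` two at a time. With probability at least `1/8` both partners lie in `B` and the two chords cross
each other; together with `c` they then form a triangle, which is cyclically oriented, so that `c`
is not a component on its own, with probability `1/4`. The triangles found in this way are disjoint
apart from `c`, hence independently oriented. As each step uses up at most three points of `A` and
`1 - 1/32 ≤ (95/96)^3`, a chord of length `ℓ` is a component on its own with probability at most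
`2 (95/96)^ℓ`. At most four partners of a given point yield a given length, so the expected number
of such chords of length at least `ω` is `O((95/96)^ω)`.
-/

open scoped BigOperators

section Matchings

variable {V : Type*} [DecidableEq V]

lemma card_sdiff_pair {S : Finset V} {s t : V} (hs : s ∈ S)
    (ht : t ∈ S.erase s) : #(S \ {s, t}) = #S - 2 := by
  obtain ⟨hts, htS⟩ := mem_erase.1 ht
  rw [card_sdiff_of_subset (insert_subset hs (singleton_subset_iff.2 htS)), card_pair hts.symm]

variable [Fintype V]

/-- The perfect matchings of `S`, encoded as the involutions of the ambient type whose set of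
non-fixed points is `S`; both endpoints of a matched pair are thus permuted by the same map. -/
noncomputable def matchings (S : Finset V) : Finset (Equiv.Perm V) :=
  univ.filter fun f => Function.Involutive f ∧ f.support = S

variable {S S' : Finset V} {s t z : V} {f g : Equiv.Perm V}

lemma mem_matchings : f ∈ matchings S ↔ Function.Involutive f ∧ ∀ i, f i ≠ i ↔ i ∈ S := by
  simp only [matchings, mem_filter_univ, Finset.ext_iff, Equiv.Perm.mem_support]

lemma apply_eq_of_mem_matchings (hf : f ∈ matchings S) (hz : z ∉ S) : f z = z :=
  not_not.1 fun h => hz (((mem_matchings.1 hf).2 z).1 h)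

lemma apply_mem_erase_of_mem_matchings (hf : f ∈ matchings S) (hs : s ∈ S) : f s ∈ S.erase s := by
  obtain ⟨hinv, hsupp⟩ := mem_matchings.1 hf
  have hne : f s ≠ s := (hsupp s).2 hs
  exact mem_erase.2 ⟨hne, (hsupp _).1 <| by rw [hinv]; exact hne.symm⟩

lemma swap_mul_apply_left (hg : g ∈ matchings (S \ {s, t})) : (Equiv.swap s t * g) s = t := by
  rw [Equiv.Perm.mul_apply, apply_eq_of_mem_matchings hg (by simp), Equiv.swap_apply_left]

lemma swap_mul_apply_of_ne (hg : g ∈ matchings (S \ {s, t})) (hs : z ≠ s) (ht : z ≠ t) :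
    (Equiv.swap s t * g) z = g z := by
  have hgs : g s = s := apply_eq_of_mem_matchings hg (by simp)
  have hgt : g t = t := apply_eq_of_mem_matchings hg (by simp)
  rw [Equiv.Perm.mul_apply, Equiv.swap_apply_of_ne_of_ne]
  · exact fun h => hs (g.injective (h.trans hgs.symm))
  · exact fun h => ht (g.injective (h.trans hgt.symm))

lemma swap_mul_mem_matchings (hs : s ∈ S) (ht : t ∈ S.erase s) (hg : g ∈ matchings (S \ {s, t})) :
    Equiv.swap s t * g ∈ matchings S := by
  obtain ⟨hts, htS⟩ := mem_erase.1 ht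
  obtain ⟨hinv, -⟩ := mem_matchings.1 hg
  have hdisj : (Equiv.swap s t).Disjoint g := by
    intro z
    by_cases hz : z = s ∨ z = t
    · exact .inr <| apply_eq_of_mem_matchings hg (by simp [hz])
    · exact .inl <| Equiv.swap_apply_of_ne_of_ne (fun h => hz (.inl h)) fun h => hz (.inr h)
  refine mem_filter.2 ⟨mem_univ _, fun z => ?_, ?_⟩
  · have hsq : Equiv.swap s t * g * (Equiv.swap s t * g) = g * g := by
      rw [hdisj.commute.symm.mul_mul_mul_comm, Equiv.swap_mul_self, one_mul]
    rw [← Equiv.Perm.mul_apply, hsq, Equiv.Perm.mul_apply, hinv]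
  · have hpair : {s, t} ⊆ S := insert_subset hs (singleton_subset_iff.2 htS)
    rw [hdisj.support_mul, Equiv.Perm.support_swap hts.symm, (mem_filter.1 hg).2.2,
      union_sdiff_of_subset hpair]

lemma swap_mul_mem_matchings_sdiff (hf : f ∈ matchings S) :
    Equiv.swap s (f s) * f ∈ matchings (S \ {s, f s}) := by
  obtain ⟨hinv, hsupp⟩ := mem_matchings.1 hf
  have happly : ∀ z, (Equiv.swap s (f s) * f) z = if z = s ∨ z = f s then z else f z := by
    intro z
    rw [Equiv.Perm.mul_apply]
    split_ifs with hz
    · rcases hz with rfl | rfl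
      · exact Equiv.swap_apply_right _ _
      · rw [hinv, Equiv.swap_apply_left]
    · refine Equiv.swap_apply_of_ne_of_ne (fun h => hz (.inr ?_)) fun h => hz (.inl ?_)
      · rw [← h, hinv]
      · exact f.injective h
  refine mem_matchings.2 ⟨fun z => ?_, fun z => ?_⟩
  · have := hinv z
    have := hinv s
    simp only [happly]
    grind
  · have := hsupp z
    rw [happly, Finset.mem_sdiff, mem_insert, mem_singleton]
    grind

lemma card_matchings_eq_of_card_eq (h : #S = #S') : #(matchings S) = #(matchings S') := by
  obtain ⟨σ, hσ⟩ := Equiv.Perm.exists_map_finset_eq S S' h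
  refine card_equiv (MulAut.conj σ).toEquiv fun f => ?_
  have hinv : Function.Involutive (σ * f * σ⁻¹) ↔ Function.Involutive f := by
    refine ⟨fun hf z => ?_, fun hf z => ?_⟩
    · simpa using hf (σ z)
    · simp [hf _]
  have hsupp : (σ * f * σ⁻¹).support = S' ↔ f.support = S := by
    rw [Equiv.Perm.support_conj, ← hσ, Finset.map_inj]
  simp only [matchings, mem_filter_univ, MulEquiv.toEquiv_eq_coe, MulEquiv.coe_toEquiv,
    MulAut.conj_apply, hinv, hsupp]

lemma sum_matchings_eq {M : Type*} [AddCommMonoid M] (hs : s ∈ S) (w : Equiv.Perm V → M) :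
    ∑ f ∈ matchings S, w f =
      ∑ t ∈ S.erase s, ∑ g ∈ matchings (S \ {s, t}), w (Equiv.swap s t * g) := by
  rw [sum_sigma']
  refine sum_bij' (fun f _ => ⟨f s, Equiv.swap s (f s) * f⟩) (fun p _ => Equiv.swap s p.1 * p.2)
    (fun f hf => mem_sigma.2
      ⟨apply_mem_erase_of_mem_matchings hf hs, swap_mul_mem_matchings_sdiff hf⟩)
    (fun p hp => swap_mul_mem_matchings hs (mem_sigma.1 hp).1 (mem_sigma.1 hp).2)
    (fun f _ => Equiv.swap_mul_self_mul _ _ _) (fun p hp => ?_)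
    (fun f _ => by rw [Equiv.swap_mul_self_mul])
  have hps : (Equiv.swap s p.1 * p.2) s = p.1 := swap_mul_apply_left (mem_sigma.1 hp).2
  simp only [hps, Equiv.swap_mul_self_mul]

lemma expect_matchings_eq (hs : s ∈ S) (w : Equiv.Perm V → ℝ) :
    𝔼 f ∈ matchings S, w f =
      𝔼 t ∈ S.erase s, 𝔼 g ∈ matchings (S \ {s, t}), w (Equiv.swap s t * g) := by
  obtain hempty | ⟨t₀, ht₀⟩ := (S.erase s).eq_empty_or_nonempty
  · rw [expect_eq_sum_div_card, sum_matchings_eq hs, hempty, sum_empty, zero_div, expect_empty]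
  have hcard : ∀ t ∈ S.erase s, #(matchings (S \ {s, t})) = #(matchings (S \ {s, t₀})) := by
    refine fun t ht => card_matchings_eq_of_card_eq ?_
    rw [card_sdiff_pair hs ht, card_sdiff_pair hs ht₀]
  have htotal : #(matchings S) = #(S.erase s) * #(matchings (S \ {s, t₀})) := by
    rw [card_eq_sum_ones, sum_matchings_eq hs, ← smul_eq_mul, ← sum_const]
    exact sum_congr rfl fun t ht => by rw [← card_eq_sum_ones, hcard t ht]
  simp only [expect_eq_sum_div_card]
  rw [sum_matchings_eq hs, htotal, Nat.cast_mul, mul_comm, ← div_div, sum_div]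
  congr 1
  exact sum_congr rfl fun t ht => by rw [hcard t ht]

end Matchings

section CrossingPairings

variable {V : Type*} [DecidableEq V]

/-- A crossing pairing of `f` from `A` to `B`: a set of disjoint pairs of points of `A` such that
both points of a pair are sent to `B` by `f`, and the two chords obtained are related by the
crossing relation `X`. -/
def IsCrossingPairing (X : V → V → V → V → Prop) (A B : Finset V) (f : V → V)
    (T : Finset (V × V)) : Prop :=
  (∀ p ∈ T, p.1 ∈ A ∧ p.2 ∈ A ∧ f p.1 ∈ B ∧ f p.2 ∈ B ∧ X p.1 (f p.1) p.2 (f p.2)) ∧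
    (T : Set (V × V)).PairwiseDisjoint fun p => ({p.1, p.2} : Finset V)

variable {X : V → V → V → V → Prop} {A A' B B' : Finset V} {f g : V → V} {T : Finset (V × V)}

lemma IsCrossingPairing.mono (hT : IsCrossingPairing X A' B' g T) (hA : A' ⊆ A) (hB : B' ⊆ B)
    (hfg : Set.EqOn f g A') : IsCrossingPairing X A B f T := by
  refine ⟨fun p hp => ?_, hT.2⟩
  obtain ⟨h₁, h₂, h₃, h₄, hX⟩ := hT.1 p hp
  rw [hfg h₁, hfg h₂]
  exact ⟨hA h₁, hA h₂, hB h₃, hB h₄, hX⟩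

variable [Fintype V]

/-- The largest size of a crossing pairing of `f` from `A` to `B`. -/
noncomputable def pairingNumber (X : V → V → V → V → Prop) (A B : Finset V) (f : V → V) : ℕ :=
  (univ.filter (IsCrossingPairing X A B f)).sup card

lemma IsCrossingPairing.card_le_pairingNumber (hT : IsCrossingPairing X A B f T) :
    #T ≤ pairingNumber X A B f :=
  le_sup (f := card) (mem_filter.2 ⟨mem_univ _, hT⟩)

lemma exists_isCrossingPairing_card_eq (X : V → V → V → V → Prop) (A B : Finset V) (f : V → V) :
    ∃ T, IsCrossingPairing X A B f T ∧ #T = pairingNumber X A B f := by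
  have hne : (univ.filter (IsCrossingPairing X A B f)).Nonempty :=
    ⟨∅, mem_filter.2 ⟨mem_univ _, by simp [IsCrossingPairing]⟩⟩
  obtain ⟨T, hT, hcard⟩ := exists_mem_eq_sup _ hne card
  exact ⟨T, (mem_filter.1 hT).2, hcard.symm⟩

lemma pairingNumber_mono (hA : A' ⊆ A) (hB : B' ⊆ B) (hfg : Set.EqOn f g A') :
    pairingNumber X A' B' g ≤ pairingNumber X A B f := by
  obtain ⟨T, hT, hcard⟩ := exists_isCrossingPairing_card_eq X A' B' g
  exact hcard ▸ (hT.mono hA hB hfg).card_le_pairingNumber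

lemma pairingNumber_add_one_le {u v : V} (hA : A' ⊆ A) (hB : B' ⊆ B) (hfg : Set.EqOn f g A')
    (hu : u ∈ A \ A') (hv : v ∈ A \ A') (hfu : f u ∈ B) (hfv : f v ∈ B)
    (hX : X u (f u) v (f v)) : pairingNumber X A' B' g + 1 ≤ pairingNumber X A B f := by
  obtain ⟨T, hT, hcard⟩ := exists_isCrossingPairing_card_eq X A' B' g
  obtain ⟨huA, huA'⟩ := Finset.mem_sdiff.1 hu
  obtain ⟨hvA, hvA'⟩ := Finset.mem_sdiff.1 hv
  have hT' := hT.mono hA hB hfg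
  have hnotMem : (u, v) ∉ T := fun h => huA' (hT.1 _ h).1
  have hinsert : IsCrossingPairing X A B f (insert (u, v) T) := by
    refine ⟨forall_mem_insert _ _ _ |>.2 ⟨⟨huA, hvA, hfu, hfv, hX⟩, hT'.1⟩, ?_⟩
    rw [coe_insert]
    refine hT.2.insert fun p hp _ => ?_
    obtain ⟨h₁, h₂, -⟩ := hT.1 p hp
    simp only [disjoint_insert_left, disjoint_singleton_left, mem_insert, mem_singleton]
    grind
  rw [← hcard, ← card_insert_of_notMem hnotMem]
  exact hinsert.card_le_pairingNumber

/-- The mean of `(3/4) ^ pairingNumber` over the uniform matchings of `A ∪ B`. Given the diagram,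
every pair of a crossing pairing forms a directed triangle with the chord separating `A` from `B`
with probability `1/4`, so this bounds the probability that this chord is a strong component. -/
noncomputable def meanWeight (X : V → V → V → V → Prop) (A B : Finset V) : ℝ :=
  𝔼 f ∈ matchings (A ∪ B), (3 / 4) ^ pairingNumber X A B f

lemma meanWeight_nonneg (X : V → V → V → V → Prop) (A B : Finset V) : 0 ≤ meanWeight X A B :=
  expect_nonneg fun _ _ => by positivity

lemma meanWeight_le_one (X : V → V → V → V → Prop) (A B : Finset V) : meanWeight X A B ≤ 1 := by
  rw [meanWeight, expect_eq_sum_div_card]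
  refine div_le_one_of_le₀ ?_ (Nat.cast_nonneg _)
  simpa using sum_le_card_nsmul (matchings (A ∪ B))
    (fun f => (3 / 4 : ℝ) ^ pairingNumber X A B f) 1
    fun f _ => pow_le_one₀ (by norm_num) (by norm_num)

lemma expect_swap_le_meanWeight (X : V → V → V → V → Prop) (A B : Finset V) (s t : V) :
    𝔼 g ∈ matchings ((A ∪ B) \ {s, t}),
        (3 / 4 : ℝ) ^ pairingNumber X A B (Equiv.swap s t * g : Equiv.Perm V) ≤
      meanWeight X (A \ {s, t}) (B \ {s, t}) := by
  rw [meanWeight, ← union_sdiff_distrib]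
  refine expect_le_expect fun g hg => ?_
  refine pow_le_pow_of_le_one (by norm_num) (by norm_num) ?_
  refine pairingNumber_mono sdiff_subset sdiff_subset fun z hz => ?_
  simp only [coe_sdiff, coe_insert, coe_singleton, Set.mem_sdiff, Set.mem_insert_iff,
    Set.mem_singleton_iff, not_or] at hz
  exact swap_mul_apply_of_ne hg hz.2.1 hz.2.2

lemma expect_swap_swap_le_meanWeight {u v b b' : V} (hAB : Disjoint A B) (hu : u ∈ A)
    (hv : v ∈ A.erase u) (hb : b ∈ B) (hb' : b' ∈ ((A ∪ B) \ {u, b}).erase v) :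
    𝔼 h ∈ matchings (((A ∪ B) \ {u, b}) \ {v, b'}), (3 / 4 : ℝ) ^ pairingNumber X A B
        (Equiv.swap u b * (Equiv.swap v b' * h) : Equiv.Perm V) ≤
      (if b' ∈ B ∧ X u b v b' then 3 / 4 else 1) *
        meanWeight X ((A \ {u, b}) \ {v, b'}) ((B \ {u, b}) \ {v, b'}) := by
  obtain ⟨hvu, hvA⟩ := mem_erase.1 hv
  have hvb : v ≠ b := fun h => disjoint_left.1 hAB hvA (h ▸ hb)
  have hvS : v ∈ (A ∪ B) \ {u, b} := by simp [hvA, hvu, hvb]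
  rw [meanWeight, ← union_sdiff_distrib, ← union_sdiff_distrib, mul_expect]
  refine expect_le_expect fun h hh => ?_
  have hg : Equiv.swap v b' * h ∈ matchings ((A ∪ B) \ {u, b}) := swap_mul_mem_matchings hvS hb' hh
  have hfu : (Equiv.swap u b * (Equiv.swap v b' * h)) u = b := swap_mul_apply_left hg
  have hfv : (Equiv.swap u b * (Equiv.swap v b' * h)) v = b' :=
    (swap_mul_apply_of_ne hg hvu hvb).trans (swap_mul_apply_left hh)
  have heqOn : Set.EqOn (Equiv.swap u b * (Equiv.swap v b' * h) : Equiv.Perm V) h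
      ((A \ {u, b}) \ {v, b'} : Finset V) := by
    intro z hz
    simp only [coe_sdiff, coe_insert, coe_singleton, Set.mem_sdiff, Set.mem_insert_iff,
      Set.mem_singleton_iff, not_or] at hz
    exact (swap_mul_apply_of_ne hg hz.1.2.1 hz.1.2.2).trans
      (swap_mul_apply_of_ne hh hz.2.1 hz.2.2)
  have hA : (A \ {u, b}) \ {v, b'} ⊆ A := sdiff_subset.trans sdiff_subset
  have hB : (B \ {u, b}) \ {v, b'} ⊆ B := sdiff_subset.trans sdiff_subset
  split_ifs with hcross
  · rw [← pow_succ']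
    refine pow_le_pow_of_le_one (by norm_num) (by norm_num) ?_
    exact pairingNumber_add_one_le hA hB heqOn (by simp [hu]) (by simp [hvA])
      (hfu.symm ▸ hb) (hfv.symm ▸ hcross.1) (by rw [hfu, hfv]; exact hcross.2)
  · rw [one_mul]
    exact pow_le_pow_of_le_one (by norm_num) (by norm_num) (pairingNumber_mono hA hB heqOn)

end CrossingPairings

section CrossingProbability

variable {ι : Type*} [DecidableEq ι] {R : ι → ι → Prop} {B P : Finset ι} {Q : ι → Finset ι}

lemma card_mul_card_sub_one_le_two_mul_sum_card
    (hR : ∀ b ∈ B, ∀ b' ∈ B, b ≠ b' → R b b' ∨ R b' b) :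
    #B * (#B - 1) ≤ 2 * ∑ b ∈ B, #(B.filter fun b' => b ≠ b' ∧ R b b') := by
  have hdouble : ∑ b ∈ B, #(B.filter fun b' => b ≠ b' ∧ R b b') =
      ∑ b ∈ B, #(B.filter fun b' => b' ≠ b ∧ R b' b) :=
    sum_card_bipartiteAbove_eq_sum_card_bipartiteBelow _
  calc #B * (#B - 1) = ∑ b ∈ B, #(B.erase b) := by
        rw [sum_congr rfl fun b hb => card_erase_of_mem hb, sum_const, smul_eq_mul]
    _ ≤ ∑ b ∈ B, (#(B.filter fun b' => b ≠ b' ∧ R b b') +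
          #(B.filter fun b' => b' ≠ b ∧ R b' b)) := by
        refine sum_le_sum fun b hb => ?_
        refine (card_le_card fun b' hb' => ?_).trans (card_union_le _ _)
        obtain ⟨hne, hb'B⟩ := mem_erase.1 hb'
        have := hR b hb b' hb'B hne.symm
        grind
    _ = _ := by rw [sum_add_distrib, ← hdouble, two_mul]

lemma card_filter_div_le_expect {Q : Finset ι} {b : ι} {m : ℝ} (hB : (B.erase b).Nonempty)
    (hBQ : B.erase b ⊆ Q) (hQ : #Q ≤ m) :
    (#(B.filter fun b' => b ≠ b' ∧ R b b') : ℝ) / m ≤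
      𝔼 b' ∈ Q, if b' ∈ B ∧ R b b' then 1 else 0 := by
  have hQpos : (0 : ℝ) < #Q := mod_cast card_pos.2 (hB.mono hBQ)
  rw [expect_eq_sum_div_card, sum_boole]
  gcongr
  intro b' hb'
  obtain ⟨hb'B, hne, hR'⟩ := mem_filter.1 hb'
  exact mem_filter.2 ⟨hBQ (mem_erase.2 ⟨hne.symm, hb'B⟩), hb'B, hR'⟩

lemma one_eighth_le_expect_expect (hB : 2 ≤ #B) (hBP : B ⊆ P) (hP : #P + 1 ≤ 2 * #B)
    (hBQ : ∀ b ∈ B, B.erase b ⊆ Q b) (hQ : ∀ b ∈ B, #(Q b) + 3 ≤ 2 * #B)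
    (hR : ∀ b ∈ B, ∀ b' ∈ B, b ≠ b' → R b b' ∨ R b' b) :
    (1 / 8 : ℝ) ≤ 𝔼 b ∈ P,
      if b ∈ B then 𝔼 b' ∈ Q b, if b' ∈ B ∧ R b b' then 1 else 0 else 0 := by
  have hBreal : (2 : ℝ) ≤ #B := mod_cast hB
  have hPreal : (#P : ℝ) ≤ 2 * #B - 1 := by rw [le_sub_iff_add_le]; exact_mod_cast hP
  have hPpos : (0 : ℝ) < #P := mod_cast (by omega : 0 < #B).trans_le (card_le_card hBP)
  have hinner : ∀ b ∈ B, (#(B.filter fun b' => b ≠ b' ∧ R b b') : ℝ) / (2 * #B - 3) ≤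
      𝔼 b' ∈ Q b, if b' ∈ B ∧ R b b' then 1 else 0 := by
    intro b hb
    have hne : (B.erase b).Nonempty :=
      (one_lt_card_iff_nontrivial.1 hB).erase_nonempty
    refine card_filter_div_le_expect hne (hBQ b hb) ?_
    rw [le_sub_iff_add_le]
    exact_mod_cast hQ b hb
  have hhalf : (#B : ℝ) * (#B - 1) ≤
      2 * ∑ b ∈ B, (#(B.filter fun b' => b ≠ b' ∧ R b b') : ℝ) := by
    rw [← Nat.cast_pred (by omega)]
    exact_mod_cast card_mul_card_sub_one_le_two_mul_sum_card hR
  calc (1 / 8 : ℝ) ≤ (#B * (#B - 1) / 2) / (2 * #B - 3) / (2 * #B - 1) := by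
        rw [div_div, div_div, div_le_div_iff₀ (by norm_num) (by nlinarith)]
        nlinarith
    _ ≤ (∑ b ∈ B, (#(B.filter fun b' => b ≠ b' ∧ R b b') : ℝ)) / (2 * #B - 3) / #P := by
        have : (0 : ℝ) < 2 * #B - 3 := by linarith
        gcongr
        linarith
    _ = (∑ b ∈ B, (#(B.filter fun b' => b ≠ b' ∧ R b b') : ℝ) / (2 * #B - 3)) / #P := by
        rw [sum_div]
    _ ≤ _ := by
        rw [expect_eq_sum_div_card, ← sum_filter, filter_mem_eq_inter, inter_eq_right.2 hBP]
        gcongr with b hb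
        exact hinner b hb

lemma expect_expect_le_of_crossing (hB : 2 ≤ #B) (hBP : B ⊆ P) (hP : #P + 1 ≤ 2 * #B)
    (hBQ : ∀ b ∈ B, B.erase b ⊆ Q b) (hQ : ∀ b ∈ B, #(Q b) + 3 ≤ 2 * #B)
    (hR : ∀ b ∈ B, ∀ b' ∈ B, b ≠ b' → R b b' ∨ R b' b) :
    (𝔼 b ∈ P, if b ∈ B then 𝔼 b' ∈ Q b, if b' ∈ B ∧ R b b' then (3 / 4 : ℝ) else 1 else 1) ≤
      31 / 32 := by
  have hPne : P.Nonempty := (card_pos.1 (by omega)).mono hBP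
  have hmean : (𝔼 b ∈ P, if b ∈ B then 𝔼 b' ∈ Q b,
        if b' ∈ B ∧ R b b' then (3 / 4 : ℝ) else 1 else 1) =
      1 - 1 / 4 * 𝔼 b ∈ P,
        if b ∈ B then 𝔼 b' ∈ Q b, if b' ∈ B ∧ R b b' then 1 else 0 else 0 := by
    rw [mul_expect, ← expect_const hPne (1 : ℝ), ← expect_sub_distrib, expect_const hPne]
    refine expect_congr rfl fun b _ => ?_
    split_ifs with hb
    · have hQne : (Q b).Nonempty := by
        refine (card_pos.1 ?_).mono (hBQ b hb)
        rw [card_erase_of_mem hb]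
        omega
      rw [mul_expect, ← expect_const hQne (1 : ℝ), ← expect_sub_distrib, expect_const hQne]
      refine expect_congr rfl fun b' _ => ?_
      split_ifs <;> norm_num
    · norm_num
  rw [hmean]
  linarith [one_eighth_le_expect_expect hB hBP hP hBQ hQ hR]

end CrossingProbability

section MeanWeight

variable {V : Type*} [DecidableEq V] {X : V → V → V → V → Prop} {A B : Finset V}

lemma card_union_sdiff_pair_erase (hAB : Disjoint A B) {u v b : V} (hu : u ∈ A)
    (hv : v ∈ A.erase u) (hb : b ∈ B) : #(((A ∪ B) \ {u, b}).erase v) = #A + #B - 3 := by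
  obtain ⟨hvu, hvA⟩ := mem_erase.1 hv
  have hub : u ≠ b := fun h => disjoint_left.1 hAB hu (h ▸ hb)
  have hvb : v ≠ b := fun h => disjoint_left.1 hAB hvA (h ▸ hb)
  rw [card_erase_of_mem (by simp [hvA, hvu, hvb]), card_sdiff_pair (by simp [hu])
    (by simp [hub.symm, hb]), card_union_of_disjoint hAB]
  omega

lemma card_sdiff_sdiff_pair (hAB : Disjoint A B) (hcard : #A ≤ #B) {u v b b' : V} (hu : u ∈ A)
    (hv : v ∈ A.erase u) (hb : b ∈ B) :
    #((A \ {u, b}) \ {v, b'}) ≤ #((B \ {u, b}) \ {v, b'}) ∧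
      #((A \ {u, b}) \ {v, b'}) < #A ∧ #A ≤ #((A \ {u, b}) \ {v, b'}) + 3 := by
  have hmem : ∀ z ∈ A, z ∉ B := fun z hz => disjoint_left.1 hAB hz
  have hA : (A \ {u, b}) \ {v, b'} = ((A.erase u).erase v).erase b' := by grind
  have hB : (B \ {u, b}) \ {v, b'} = (B.erase b).erase b' := by grind
  have hcardA : #((A.erase u).erase v) = #A - 2 := by
    rw [card_erase_of_mem hv, card_erase_of_mem hu, Nat.sub_sub]
  have hcardB : #(B.erase b) = #B - 1 := card_erase_of_mem hb
  have hApos : 2 ≤ #A :=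
    one_lt_card.2 ⟨v, mem_of_mem_erase hv, u, hu, ne_of_mem_erase hv⟩
  rw [hA, hB, card_erase_eq_ite (s := (A.erase u).erase v), card_erase_eq_ite (s := B.erase b),
    hcardA, hcardB]
  split_ifs with hb'A hb'B hb'B
  · exact absurd (mem_of_mem_erase hb'B) (hmem b' (by grind))
  all_goals omega

variable [Fintype V]

lemma meanWeight_le_mul_expect {u v : V} {ρ : ℝ} (hAB : Disjoint A B)
    (hu : u ∈ A) (hv : v ∈ A.erase u)
    (hone : ∀ t ∈ A.erase u, meanWeight X (A \ {u, t}) (B \ {u, t}) ≤ ρ)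
    (htwo : ∀ b ∈ B, ∀ b' ∈ ((A ∪ B) \ {u, b}).erase v,
      meanWeight X ((A \ {u, b}) \ {v, b'}) ((B \ {u, b}) \ {v, b'}) ≤ ρ) :
    meanWeight X A B ≤ ρ * 𝔼 t ∈ (A ∪ B).erase u,
      if t ∈ B then 𝔼 b' ∈ ((A ∪ B) \ {u, t}).erase v,
        if b' ∈ B ∧ X u t v b' then (3 / 4 : ℝ) else 1 else 1 := by
  obtain ⟨hvu, hvA⟩ := mem_erase.1 hv
  rw [meanWeight, expect_matchings_eq (mem_union_left _ hu), mul_expect]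
  refine expect_le_expect fun t ht => ?_
  split_ifs with htB
  · have hvt : v ≠ t := fun h => disjoint_left.1 hAB hvA (h ▸ htB)
    rw [expect_matchings_eq (s := v) (by simp [hvA, hvu, hvt]), mul_expect]
    refine expect_le_expect fun b' hb' => ?_
    refine (expect_swap_swap_le_meanWeight hAB hu hv htB hb').trans ?_
    rw [mul_comm]
    gcongr
    exact htwo t htB b' hb'
  · have htA : t ∈ A.erase u := by grind
    rw [mul_one]
    exact (expect_swap_le_meanWeight X A B u t).trans (hone t htA)

/-- Revealing the partners of two points `u`, `v` of `A` gains a factor `31/32`: with probability at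
least `1/8` they lie in `B` and the two chords cross, which costs a factor `3/4`. -/
lemma meanWeight_le_mul_of_forall_le {u v : V} {ρ : ℝ} (hAB : Disjoint A B) (hcard : #A ≤ #B)
    (hu : u ∈ A) (hv : v ∈ A.erase u)
    (hX : ∀ b ∈ B, ∀ b' ∈ B, b ≠ b' → X u b v b' ∨ X u b' v b)
    (hone : ∀ t ∈ A.erase u, meanWeight X (A \ {u, t}) (B \ {u, t}) ≤ ρ)
    (htwo : ∀ b ∈ B, ∀ b' ∈ ((A ∪ B) \ {u, b}).erase v,
      meanWeight X ((A \ {u, b}) \ {v, b'}) ((B \ {u, b}) \ {v, b'}) ≤ ρ) :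
    meanWeight X A B ≤ ρ * (31 / 32) := by
  obtain ⟨hvu, hvA⟩ := mem_erase.1 hv
  have hA : 2 ≤ #A := one_lt_card.2 ⟨v, hvA, u, hu, hvu⟩
  have hρ : 0 ≤ ρ := (meanWeight_nonneg X _ _).trans (hone v hv)
  have huB : u ∉ B := disjoint_left.1 hAB hu
  have hvB : v ∉ B := disjoint_left.1 hAB hvA
  have hBP : B ⊆ (A ∪ B).erase u := subset_erase.2 ⟨subset_union_right, huB⟩
  have hBQ : ∀ b ∈ B, B.erase b ⊆ ((A ∪ B) \ {u, b}).erase v := by grind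
  have hP : #((A ∪ B).erase u) + 1 ≤ 2 * #B := by
    rw [card_erase_add_one (mem_union_left _ hu), card_union_of_disjoint hAB]
    omega
  have hQ : ∀ b ∈ B, #(((A ∪ B) \ {u, b}).erase v) + 3 ≤ 2 * #B := by
    intro b hb
    have := card_union_sdiff_pair_erase hAB hu hv hb
    omega
  refine (meanWeight_le_mul_expect hAB hu hv hone htwo).trans ?_
  gcongr
  exact expect_expect_le_of_crossing (R := fun b b' => X u b v b') (hA.trans hcard)
    hBP hP hBQ hQ hX

theorem meanWeight_le (hAB : Disjoint A B) (hcard : #A ≤ #B)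
    (hX : ∀ a ∈ A, ∀ a' ∈ A, ∀ b ∈ B, ∀ b' ∈ B, a ≠ a' → b ≠ b' → X a b a' b' ∨ X a b' a' b) :
    meanWeight X A B ≤ 2 * (95 / 96) ^ #A := by
  induction hn : #A using Nat.strong_induction_on generalizing A B with
  | _ n ih =>
  subst hn
  rcases lt_or_ge #A 3 with hsmall | hlarge
  · calc meanWeight X A B ≤ 2 * (95 / 96) ^ 2 := (meanWeight_le_one X A B).trans (by norm_num)
      _ ≤ 2 * (95 / 96) ^ #A := by
        gcongr 2 * ?_
        exact pow_le_pow_of_le_one (by norm_num) (by norm_num) (by omega)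
  have hsub : ∀ A' ⊆ A, ∀ B' ⊆ B, #A' ≤ #B' → #A' < #A → #A ≤ #A' + 3 →
      meanWeight X A' B' ≤ 2 * (95 / 96) ^ (#A - 3) := by
    intro A' hA' B' hB' hcard' hlt hge
    have hX' : ∀ a ∈ A', ∀ a' ∈ A', ∀ b ∈ B', ∀ b' ∈ B', a ≠ a' → b ≠ b' →
        X a b a' b' ∨ X a b' a' b := fun a ha a' ha' b hb b' hb' =>
      hX a (hA' ha) a' (hA' ha') b (hB' hb) b' (hB' hb')
    refine (ih _ hlt (hAB.mono hA' hB') hcard' hX' rfl).trans ?_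
    gcongr 2 * ?_
    exact pow_le_pow_of_le_one (by norm_num) (by norm_num) (by omega)
  obtain ⟨u, hu, v, hv, huv⟩ := one_lt_card.1 (by omega : 1 < #A)
  have hstep : meanWeight X A B ≤ 2 * (95 / 96) ^ (#A - 3) * (31 / 32) := by
    refine meanWeight_le_mul_of_forall_le hAB hcard hu (mem_erase.2 ⟨huv.symm, hv⟩)
      (fun b hb b' hb' => hX u hu v hv b hb b' hb' huv) (fun t ht => ?_) fun b hb b' _ => ?_
    · have hcardA : #(A \ {u, t}) = #A - 2 := card_sdiff_pair hu ht
      have hBeq : B \ {u, t} = B := by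
        refine sdiff_eq_left.2 (hAB.symm.mono_right ?_)
        exact insert_subset hu (singleton_subset_iff.2 (mem_of_mem_erase ht))
      exact hsub _ sdiff_subset _ sdiff_subset (by rw [hBeq]; omega) (by omega) (by omega)
    · obtain ⟨hcard', hlt, hge⟩ := card_sdiff_sdiff_pair hAB hcard (b' := b') hu
        (mem_erase.2 ⟨huv.symm, hv⟩) hb
      exact hsub _ (sdiff_subset.trans sdiff_subset) _ (sdiff_subset.trans sdiff_subset)
        hcard' hlt hge
  calc meanWeight X A B ≤ 2 * (95 / 96) ^ (#A - 3) * (31 / 32) := hstep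
    _ ≤ 2 * (95 / 96) ^ (#A - 3) * (95 / 96) ^ 3 := by gcongr; norm_num
    _ = 2 * (95 / 96) ^ #A := by rw [mul_assoc, ← pow_add, Nat.sub_add_cancel hlarge]

end MeanWeight

section Coins

variable {I J α : Type*} [Fintype I] [DecidableEq I] [Fintype J] [DecidableEq J]
  [Fintype α] [Nonempty α]

lemma expect_comp_of_injective {e : J → I} (he : Function.Injective e) (w : (J → α) → ℝ) :
    𝔼 β : I → α, w (β ∘ e) = 𝔼 γ : J → α, w γ := by
  have hrange : 𝔼 γ : Set.range e → α, w (γ ∘ Equiv.ofInjective e he) = 𝔼 γ : J → α, w γ :=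
    Fintype.expect_equiv ((Equiv.ofInjective e he).arrowCongr (Equiv.refl α)).symm _ _ fun _ => rfl
  rw [← hrange, Fintype.expect_equiv (Equiv.piEquivPiSubtypeProd (· ∈ Set.range e) fun _ => α)
    (fun β => w (β ∘ e)) (fun p => w (p.1 ∘ Equiv.ofInjective e he)) fun _ => rfl,
    ← univ_product_univ, expect_product]
  exact expect_congr rfl fun γ _ => expect_const univ_nonempty (w (γ ∘ Equiv.ofInjective e he))

lemma expect_ite_forall_not_exists_eq_xor {ι : Type*} [Fintype ι] {e : ι × Fin 3 → I}
    (he : Function.Injective e) (s : ι → Fin 3 → Bool) :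
    (𝔼 β : I → Bool, if ∀ i, ¬∃ c, ∀ j, β (e (i, j)) = (c ^^ s i j) then (1 : ℝ) else 0) =
      (3 / 4) ^ Fintype.card ι := by
  have hsix : ∀ s : Fin 3 → Bool,
      #(univ.filter fun δ : Fin 3 → Bool => ¬∃ c, ∀ j, δ j = (c ^^ s j)) = 6 := by decide
  calc _ = 𝔼 γ : ι × Fin 3 → Bool,
        if ∀ i, ¬∃ c, ∀ j, γ (i, j) = (c ^^ s i j) then (1 : ℝ) else 0 :=
        expect_comp_of_injective he fun γ : ι × Fin 3 → Bool =>
          if ∀ i, ¬∃ c, ∀ j, γ (i, j) = (c ^^ s i j) then (1 : ℝ) else 0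
    _ = 𝔼 δ : ι → Fin 3 → Bool, if ∀ i, ¬∃ c, ∀ j, δ i j = (c ^^ s i j) then (1 : ℝ) else 0 :=
        Fintype.expect_equiv (Equiv.curry ι (Fin 3) Bool) _ _ fun _ => rfl
    _ = #(Fintype.piFinset fun i =>
          univ.filter fun δ : Fin 3 → Bool => ¬∃ c, ∀ j, δ j = (c ^^ s i j)) /
          Fintype.card (ι → Fin 3 → Bool) := by
        rw [Fintype.expect_eq_sum_div_card, sum_boole]
        congr 3
        ext δ
        simp only [mem_filter_univ, Fintype.mem_piFinset]
    _ = (3 / 4) ^ Fintype.card ι := by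
        rw [Fintype.card_piFinset, prod_congr rfl fun i _ => hsix (s i), prod_const, card_univ,
          Fintype.card_fun, Fintype.card_fun, Fintype.card_bool, Fintype.card_fin, Nat.cast_pow,
          Nat.cast_pow, ← div_pow]
        norm_num

end Coins

section Crossings

variable {n : ℕ}

/-- The chords `ab` and `cd` cross; `Crosses C x u` is `Cross x (C x) u (C u)`. -/
def Cross {m : ℕ} (a b c d : Fin m) : Prop := Xor (Between a b c) (Between a b d)

lemma between_iff {m : ℕ} {a b c : Fin m} :
    Between a b c ↔ ((a : ℕ) < c ∨ (b : ℕ) < c) ∧ ((c : ℕ) < a ∨ (c : ℕ) < b) := by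
  simp only [Between, min_lt_iff, lt_max_iff, Fin.lt_def]

lemma Cross.symm {m : ℕ} {a b c d : Fin m} (h : Cross a b c d) (hac : a ≠ c) (had : a ≠ d)
    (hbc : b ≠ c) (hbd : b ≠ d) : Cross c d a b := by
  simp only [Cross, xor_def, between_iff, ne_eq, Fin.ext_iff] at *
  omega

lemma Cross.cross_or_cross {m : ℕ} {x y a a' b b' : Fin m} (hab : Cross x y a b)
    (hab' : Cross x y a b') (ha'b : Cross x y a' b) (hx : x ∉ ({a, a', b, b'} : Set (Fin m)))
    (hy : y ∉ ({a, a', b, b'} : Set (Fin m))) (ha : a ≠ a') (hb : b ≠ b') :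
    Cross a b a' b' ∨ Cross a b' a' b := by
  simp only [Cross, xor_def, between_iff, ne_eq, Fin.ext_iff, Set.mem_insert_iff,
    Set.mem_singleton_iff, not_or] at *
  omega

variable {C : ChordDiagram n} {p q : Fin (2 * n)}

lemma Crosses.ne (h : Crosses C p q) : q ≠ p ∧ q ≠ C.1 p := by
  have hcross : Cross p (C.1 p) q (C.1 q) := h
  refine ⟨?_, ?_⟩ <;> rintro rfl <;>
    simp only [Cross, C.2.1, xor_def, between_iff] at hcross <;> omega

lemma Crosses.symm (h : Crosses C p q) : Crosses C q p := by
  obtain ⟨hne, hne'⟩ := h.ne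
  refine Cross.symm h hne.symm (fun e => hne' ?_) hne'.symm fun e => hne ?_
  · rw [e, C.2.1]
  · rw [← C.2.1 p, ← C.2.1 q, e]

lemma eq_or_eq_of_chordRep_eq (h : chordRep C p = chordRep C q) : q = p ∨ q = C.1 p := by
  have hp := C.2.1 p
  have hq := C.2.1 q
  rcases min_choice p (C.1 p) with h₁ | h₁ <;> rcases min_choice q (C.1 q) with h₂ | h₂ <;>
    simp only [chordRep, h₁, h₂] at h <;> grind

lemma Crosses.chordRep_ne (h : Crosses C p q) : chordRep C p ≠ chordRep C q :=
  fun e => (eq_or_eq_of_chordRep_eq e).elim h.ne.1 h.ne.2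

end Crossings

section Orientations

variable {n : ℕ} {C : ChordDiagram n} {β : Fin (2 * n) → Fin (2 * n) → Bool}
  {x p q : Fin (2 * n)}

/-- The index of the coin deciding which of the chords of `p` and `q` over-crosses the other. -/
def coinKey (C : ChordDiagram n) (p q : Fin (2 * n)) : Fin (2 * n) × Fin (2 * n) :=
  (min (chordRep C p) (chordRep C q), max (chordRep C p) (chordRep C q))

/-- The value of the coin `coinKey C p q` for which the chord of `p` over-crosses that of `q`. -/
def coinSign (C : ChordDiagram n) (p q : Fin (2 * n)) : Bool :=
  decide (chordRep C p ≤ chordRep C q)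

lemma coinKey_eq_iff {p' q' : Fin (2 * n)} : coinKey C p q = coinKey C p' q' ↔
    s(chordRep C p, chordRep C q) = s(chordRep C p', chordRep C q') := by
  rw [coinKey, coinKey, Prod.mk.injEq, Sym2.eq_iff]
  grind

lemma overD_iff (h : Crosses C p q) :
    OverD (C, β) p q ↔ β.uncurry (coinKey C p q) = coinSign C p q := by
  rcases lt_or_gt_of_ne h.chordRep_ne with hlt | hlt <;>
    simp [OverD, coinKey, coinSign, h, hlt, hlt.le, hlt.not_ge, hlt.not_gt]

lemma overD_iff_not (h : Crosses C p q) :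
    OverD (C, β) q p ↔ β.uncurry (coinKey C p q) = !coinSign C p q := by
  have hkey : coinKey C q p = coinKey C p q := coinKey_eq_iff.2 Sym2.eq_swap
  have hsign : coinSign C q p = !coinSign C p q := by
    rcases lt_or_gt_of_ne h.chordRep_ne with hlt | hlt <;>
      simp [coinSign, hlt.le, hlt.not_ge]
  rw [overD_iff h.symm, hkey, hsign]

/-- The coins of the three crossings of the triangle formed by the chords of `x`, `p.1`, `p.2`. -/
def triangleKey (C : ChordDiagram n) (x : Fin (2 * n)) (p : Fin (2 * n) × Fin (2 * n)) :
    Fin 3 → Fin (2 * n) × Fin (2 * n) :=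
  ![coinKey C x p.1, coinKey C p.1 p.2, coinKey C p.2 x]

/-- The values of the coins `triangleKey C x p` that orient the triangle as `x → p.1 → p.2 → x`;
flipping all three reverses this cycle. -/
def triangleSign (C : ChordDiagram n) (x : Fin (2 * n)) (p : Fin (2 * n) × Fin (2 * n)) :
    Fin 3 → Bool :=
  ![coinSign C x p.1, coinSign C p.1 p.2, coinSign C p.2 x]

lemma mutualReach_of_triangle {p : Fin (2 * n) × Fin (2 * n)} (hx₁ : Crosses C x p.1)
    (hx₂ : Crosses C x p.2) (hp : Crosses C p.1 p.2) {c : Bool}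
    (h : ∀ j, β.uncurry (triangleKey C x p j) = (c ^^ triangleSign C x p j)) :
    MutualReach (C, β) x p.1 := by
  have h₀ : β.uncurry (coinKey C x p.1) = (c ^^ coinSign C x p.1) := h 0
  have h₁ : β.uncurry (coinKey C p.1 p.2) = (c ^^ coinSign C p.1 p.2) := h 1
  have h₂ : β.uncurry (coinKey C p.2 x) = (c ^^ coinSign C p.2 x) := h 2
  cases c
  · simp only [Bool.false_xor, ← overD_iff hx₁, ← overD_iff hp, ← overD_iff hx₂.symm] at h₀ h₁ h₂
    exact ⟨.inr (.inr (.single h₀)), .inr (.inr (.head h₁ (.single h₂)))⟩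
  · simp only [Bool.true_xor, ← overD_iff_not hx₁, ← overD_iff_not hp,
      ← overD_iff_not hx₂.symm] at h₀ h₁ h₂
    exact ⟨.inr (.inr (.head h₂ (.single h₁))), .inr (.inr (.single h₀))⟩

/-- The chord of `x` is a strong component on its own. -/
def IsSingleComponent (D : OrientedChordDiagram n) (x : Fin (2 * n)) : Prop :=
  ∀ u : Fin (2 * n), u ≠ x → u ≠ D.1.1 x → ¬ MutualReach D x u

variable {A B : Finset (Fin (2 * n))} {T : Finset (Fin (2 * n) × Fin (2 * n))}

lemma IsCrossingPairing.crosses (hT : IsCrossingPairing Cross A B C.1 T)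
    (hsep : ∀ a ∈ A, ∀ b ∈ B, Cross x (C.1 x) a b) {p : Fin (2 * n) × Fin (2 * n)} (hp : p ∈ T) :
    Crosses C x p.1 ∧ Crosses C x p.2 ∧ Crosses C p.1 p.2 := by
  obtain ⟨h₁, h₂, h₃, h₄, hX⟩ := hT.1 p hp
  exact ⟨hsep _ h₁ _ h₃, hsep _ h₂ _ h₄, hX⟩

lemma IsCrossingPairing.chordRep_ne (hT : IsCrossingPairing Cross A B C.1 T) (hAB : Disjoint A B)
    {p q : Fin (2 * n) × Fin (2 * n)} (hp : p ∈ T) (hq : q ∈ T) (hpq : p ≠ q) :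
    ∀ a ∈ ({p.1, p.2} : Finset (Fin (2 * n))), ∀ b ∈ ({q.1, q.2} : Finset (Fin (2 * n))),
      chordRep C a ≠ chordRep C b := by
  have hmem : ∀ p ∈ T, ∀ a ∈ ({p.1, p.2} : Finset (Fin (2 * n))), a ∈ A ∧ C.1 a ∈ B := by
    intro p hp
    have := hT.1 p hp
    grind
  intro a ha b hb hrep
  rcases eq_or_eq_of_chordRep_eq hrep with rfl | rfl
  · exact disjoint_left.1 (hT.2 hp hq hpq) ha hb
  · exact disjoint_left.1 hAB (hmem q hq _ hb).1 (hmem p hp a ha).2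

lemma IsCrossingPairing.injective_triangleKey (hT : IsCrossingPairing Cross A B C.1 T)
    (hAB : Disjoint A B) (hsep : ∀ a ∈ A, ∀ b ∈ B, Cross x (C.1 x) a b) :
    Function.Injective fun i : T × Fin 3 => triangleKey C x i.1 i.2 := by
  rintro ⟨⟨p, hp⟩, j⟩ ⟨⟨q, hq⟩, k⟩ h
  obtain ⟨hp₁, hp₂, hp₃⟩ := hT.crosses hsep hp
  obtain ⟨hq₁, hq₂, hq₃⟩ := hT.crosses hsep hq
  have := hp₁.chordRep_ne
  have := hp₂.chordRep_ne
  have := hp₃.chordRep_ne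
  have := hq₁.chordRep_ne
  have := hq₂.chordRep_ne
  have := hq₃.chordRep_ne
  have hne : p ≠ q → _ := hT.chordRep_ne hAB hp hq
  simp only [mem_insert, mem_singleton, forall_eq_or_imp, forall_eq] at hne
  fin_cases j <;> fin_cases k <;>
    simp only [triangleKey, Fin.zero_eta, Fin.mk_one, Fin.reduceFinMk, Matrix.cons_val,
      coinKey_eq_iff, Sym2.eq_iff] at h <;> grind

lemma IsCrossingPairing.expect_isSingleComponent_le (hT : IsCrossingPairing Cross A B C.1 T)
    (hAB : Disjoint A B) (hsep : ∀ a ∈ A, ∀ b ∈ B, Cross x (C.1 x) a b) :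
    (𝔼 β : Fin (2 * n) → Fin (2 * n) → Bool, if IsSingleComponent (C, β) x then (1 : ℝ) else 0) ≤
      (3 / 4) ^ #T := by
  have hcoins := expect_ite_forall_not_exists_eq_xor (hT.injective_triangleKey hAB hsep)
    fun i => triangleSign C x i
  rw [Fintype.card_coe] at hcoins
  rw [← hcoins]
  calc (𝔼 β : Fin (2 * n) → Fin (2 * n) → Bool, if IsSingleComponent (C, β) x then (1 : ℝ) else 0)
      = 𝔼 γ : Fin (2 * n) × Fin (2 * n) → Bool,
          if IsSingleComponent (C, Function.curry γ) x then (1 : ℝ) else 0 :=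
        Fintype.expect_equiv (Equiv.curry _ _ _).symm _ _ fun _ => rfl
    _ ≤ _ := by
        refine expect_le_expect fun γ _ => ?_
        split_ifs with hsingle htri
        · rfl
        · refine absurd (fun p => ?_) htri
          rintro ⟨c, hc⟩
          obtain ⟨h₁, h₂, h₃⟩ := hT.crosses hsep p.2
          exact hsingle _ h₁.ne.1 h₁.ne.2 (mutualReach_of_triangle h₁ h₂ h₃ hc)
        · exact zero_le_one
        · rfl

lemma expect_isSingleComponent_le (hAB : Disjoint A B)
    (hsep : ∀ a ∈ A, ∀ b ∈ B, Cross x (C.1 x) a b) :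
    (𝔼 β : Fin (2 * n) → Fin (2 * n) → Bool, if IsSingleComponent (C, β) x then (1 : ℝ) else 0) ≤
      (3 / 4) ^ pairingNumber Cross A B C.1 := by
  obtain ⟨T, hT, hcard⟩ := exists_isCrossingPairing_card_eq Cross A B C.1
  exact hcard ▸ hT.expect_isSingleComponent_le hAB hsep

end Orientations

section Arcs

variable {n : ℕ} {x y : Fin (2 * n)}

/-- The number of points on the shorter of the two arcs between `x` and `y`, so that
`chordLength C x` is `arcLength x (C x)`. -/
def arcLength (x y : Fin (2 * n)) : ℕ :=
  min (max (x : ℕ) y - min (x : ℕ) y - 1) (2 * n - (max (x : ℕ) y - min (x : ℕ) y) - 1)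

lemma card_filter_between (x y : Fin (2 * n)) :
    #(univ.filter (Between x y)) = max (x : ℕ) y - min (x : ℕ) y - 1 := by
  have h : univ.filter (Between x y) = Ioo (min x y) (max x y) := by
    ext z
    simp only [Between, mem_filter_univ, mem_Ioo]
  rw [h, Fin.card_Ioo, Fin.coe_max, Fin.coe_min]

lemma exists_arcs (hxy : x ≠ y) : ∃ A B : Finset (Fin (2 * n)), Disjoint A B ∧
    A ∪ B = univ \ {x, y} ∧ #A ≤ #B ∧ #A = arcLength x y ∧ ∀ a ∈ A, ∀ b ∈ B, Cross x y a b := by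
  set I := univ.filter (Between x y)
  set O := (univ \ {x, y}) \ I
  have hI : I ⊆ univ \ {x, y} := by
    intro z hz
    simp only [I, mem_filter_univ, between_iff, Finset.mem_sdiff, mem_univ, mem_insert,
      mem_singleton, Fin.ext_iff, true_and] at hz ⊢
    omega
  have hcardI : #I = max (x : ℕ) y - min (x : ℕ) y - 1 := card_filter_between x y
  have hcardO : #O = 2 * n - 2 - #I := by
    rw [card_sdiff_of_subset hI, card_sdiff_pair (mem_univ x) (by simp [hxy.symm]), card_fin]
  have hbetween : ∀ a ∈ I, ∀ b ∈ O, Between x y a ∧ ¬Between x y b := by grind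
  have hlength : arcLength x y = min #I #O := by
    have := Fin.val_ne_of_ne hxy
    have := x.2
    have := y.2
    rw [hcardO, hcardI, arcLength]
    omega
  rcases le_total #I #O with hle | hle
  · refine ⟨I, O, disjoint_sdiff, union_sdiff_of_subset hI, hle, by rw [hlength, min_eq_left hle],
      fun a ha b hb => ?_⟩
    exact .inl (hbetween a ha b hb)
  · refine ⟨O, I, sdiff_disjoint, sdiff_union_of_subset hI, hle, by rw [hlength, min_eq_right hle],
      fun a ha b hb => ?_⟩
    exact .inr (hbetween b hb a ha)

lemma card_filter_arcLength_eq_le (x : Fin (2 * n)) (l : ℕ) :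
    #((univ.erase x).filter fun y => arcLength x y = l) ≤ 4 := by
  have hmaps : Set.MapsTo (fun y : Fin (2 * n) => ((y : ℕ) : ℤ))
      ((univ.erase x).filter fun y => arcLength x y = l : Finset (Fin (2 * n)))
      ({(x : ℤ) + (l + 1), (x : ℤ) - (l + 1), (x : ℤ) + (2 * n - l - 1),
        (x : ℤ) - (2 * n - l - 1)} : Finset ℤ) := by
    intro y hy
    rw [mem_coe, mem_filter, mem_erase, ne_eq, Fin.ext_iff, arcLength] at hy
    simp only [coe_insert, coe_singleton, Set.mem_insert_iff, Set.mem_singleton_iff]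
    have := x.2
    have := y.2
    omega
  have hinj : Function.Injective fun y : Fin (2 * n) => ((y : ℕ) : ℤ) :=
    Nat.cast_injective.comp Fin.val_injective
  exact (card_le_card_of_injOn _ hmaps hinj.injOn).trans card_le_four

lemma sum_pow_le_of_card_fiber_le {ι : Type*} {s : Finset ι} {g : ι → ℕ} {K w : ℕ} {r : ℝ}
    (hr : 0 ≤ r) (hr' : r < 1) (hw : ∀ i ∈ s, w ≤ g i)
    (hK : ∀ l, #(s.filter fun i => g i = l) ≤ K) :
    ∑ i ∈ s, r ^ g i ≤ K * (r ^ w / (1 - r)) := by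
  have himage : s.image g ⊆ Ico w (s.sup g + 1) := by
    intro l hl
    obtain ⟨i, hi, rfl⟩ := mem_image.1 hl
    exact mem_Ico.2 ⟨hw i hi, Nat.lt_succ_of_le (le_sup hi)⟩
  calc ∑ i ∈ s, r ^ g i = ∑ l ∈ s.image g, #(s.filter fun i => g i = l) • r ^ l := sum_comp _ _
    _ ≤ ∑ l ∈ s.image g, K * r ^ l := by
        simp only [nsmul_eq_mul]
        gcongr with l
        exact hK l
    _ ≤ ∑ l ∈ Ico w (s.sup g + 1), K * r ^ l :=
        sum_le_sum_of_subset_of_nonneg himage fun _ _ _ => by positivity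
    _ ≤ K * (r ^ w / (1 - r)) := by
        rw [← mul_sum]
        gcongr
        exact geom_sum_Ico_le_of_lt_one hr hr'

lemma sum_arcLength_le (x : Fin (2 * n)) (w : ℕ) :
    ∑ y ∈ (univ.erase x).filter (fun y => w ≤ arcLength x y), (95 / 96 : ℝ) ^ arcLength x y ≤
      384 * (95 / 96) ^ w := by
  have h := sum_pow_le_of_card_fiber_le (s := (univ.erase x).filter (fun y => w ≤ arcLength x y))
    (r := 95 / 96) (by norm_num) (by norm_num) (fun y hy => (mem_filter.1 hy).2) fun l =>
      (card_le_card (filter_subset_filter _ (filter_subset _ _))).trans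
        (card_filter_arcLength_eq_le x l)
  refine h.trans_eq ?_
  push_cast
  ring

end Arcs

section SingleComponents

variable {n : ℕ}

instance (n : ℕ) : Nonempty (ChordDiagram n) := by
  refine ⟨⟨Fin.rev, Fin.rev_rev, fun i h => ?_⟩⟩
  have := congrArg Fin.val h
  rw [Fin.val_rev] at this
  omega

lemma probD_eq_expect (E : OrientedChordDiagram n → Prop) [DecidablePred E] :
    probD n E = 𝔼 D : OrientedChordDiagram n, if E D then 1 else 0 := by
  rw [probD, expect_eq_sum_div_card, sum_boole]
  congr!

lemma one_sub_sum_probD_le {ι : Type*} [Fintype ι] (P : ι → OrientedChordDiagram n → Prop) :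
    1 - ∑ i, probD n (P i) ≤ probD n fun D => ¬∃ i, P i D := by
  rw [sub_le_iff_le_add]
  calc (1 : ℝ) = 𝔼 _D : OrientedChordDiagram n, 1 := (expect_const univ_nonempty 1).symm
    _ ≤ 𝔼 D : OrientedChordDiagram n,
          ((if ¬∃ i, P i D then 1 else 0) + ∑ i, if P i D then 1 else 0) := by
        refine expect_le_expect fun D _ => ?_
        by_cases h : ∃ i, P i D
        · obtain ⟨i, hi⟩ := h
          rw [if_neg (not_not.2 ⟨i, hi⟩), zero_add, sum_boole, Nat.one_le_cast]
          exact card_pos.2 ⟨i, mem_filter.2 ⟨mem_univ i, hi⟩⟩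
        · rw [if_pos h, sum_boole]
          exact le_add_of_nonneg_right (Nat.cast_nonneg _)
    _ = _ := by simp only [expect_add_distrib, expect_sum_comm, probD_eq_expect]

lemma probD_le_one (E : OrientedChordDiagram n → Prop) : probD n E ≤ 1 :=
  div_le_one_of_le₀ (mod_cast card_le_card (filter_subset _ _)) (Nat.cast_nonneg _)

lemma expect_chordDiagram_eq (w : (Fin (2 * n) → Fin (2 * n)) → ℝ) :
    𝔼 C : ChordDiagram n, w C.1 = 𝔼 f ∈ matchings (univ : Finset (Fin (2 * n))), w f := by
  refine expect_bij (fun C _ => Function.Involutive.toPerm C.1 C.2.1)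
    (fun C _ => mem_matchings.2 ⟨C.2.1, fun z => iff_of_true (C.2.2 z) (mem_univ z)⟩)
    (fun C _ => rfl) (fun C _ C' _ h => Subtype.ext (congrArg DFunLike.coe h)) fun f hf => ?_
  obtain ⟨hinv, hsupp⟩ := mem_matchings.1 hf
  exact ⟨⟨f, hinv, fun z => (hsupp z).2 (mem_univ z)⟩, mem_univ _, Equiv.ext fun _ => rfl⟩

lemma expect_matchings_sdiff_pair_le {x y : Fin (2 * n)} {A B : Finset (Fin (2 * n))}
    (hAB : Disjoint A B) (hunion : A ∪ B = univ \ {x, y}) (hcard : #A ≤ #B)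
    (hsep : ∀ a ∈ A, ∀ b ∈ B, Cross x y a b) :
    𝔼 g ∈ matchings (univ \ {x, y}),
        (3 / 4 : ℝ) ^ pairingNumber Cross A B (Equiv.swap x y * g : Equiv.Perm (Fin (2 * n))) ≤
      2 * (95 / 96) ^ #A := by
  have hnotMem : ∀ z ∈ A ∪ B, z ≠ x ∧ z ≠ y := by
    rw [hunion]
    simp
  have hA : A \ {x, y} = A := by grind
  have hB : B \ {x, y} = B := by grind
  have hAB' : (A ∪ B) \ {x, y} = univ \ {x, y} := by rw [hunion, Finset.sdiff_idem]
  refine (hAB' ▸ expect_swap_le_meanWeight Cross A B x y).trans ?_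
  rw [hA, hB]
  refine meanWeight_le hAB hcard fun a ha a' ha' b hb b' hb' hne hne' => ?_
  exact (hsep a ha b hb).cross_or_cross (hsep a ha b' hb') (hsep a' ha' b hb) (by grind) (by grind)
    hne hne'

lemma probD_isSingleComponent_le_expect_pairingNumber (x : Fin (2 * n)) (w : ℕ)
    {A B : Fin (2 * n) → Finset (Fin (2 * n))} (hAB : ∀ y, x ≠ y → Disjoint (A y) (B y))
    (hsep : ∀ y, x ≠ y → ∀ a ∈ A y, ∀ b ∈ B y, Cross x y a b) :
    probD n (fun D => w ≤ chordLength D.1 x ∧ IsSingleComponent D x) ≤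
      𝔼 C : ChordDiagram n, if w ≤ arcLength x (C.1 x) then
        (3 / 4 : ℝ) ^ pairingNumber Cross (A (C.1 x)) (B (C.1 x)) C.1 else 0 := by
  rw [probD_eq_expect, ← univ_product_univ, expect_product]
  refine expect_le_expect fun C _ => ?_
  split_ifs with hw
  · have hne : x ≠ C.1 x := (C.2.2 x).symm
    refine le_trans (expect_le_expect fun β _ => ?_)
      (expect_isSingleComponent_le (hAB (C.1 x) hne) (hsep (C.1 x) hne))
    split_ifs with h₁ h₂ h₂ <;> first | rfl | exact zero_le_one | exact absurd h₁.2 h₂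
  · have hlen : ¬w ≤ chordLength C x := hw
    simp only [hlen, false_and, if_false, expect_const_zero, le_refl]

lemma probD_isSingleComponent_le_expect (x : Fin (2 * n)) (w : ℕ) :
    probD n (fun D => w ≤ chordLength D.1 x ∧ IsSingleComponent D x) ≤
      𝔼 y ∈ univ.erase x, if w ≤ arcLength x y then 2 * (95 / 96) ^ arcLength x y else 0 := by
  choose! A B hAB hunion hcard hlength hsep using fun y => exists_arcs (x := x) (y := y)
  calc probD n (fun D => w ≤ chordLength D.1 x ∧ IsSingleComponent D x)
      ≤ 𝔼 C : ChordDiagram n, if w ≤ arcLength x (C.1 x) then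
          (3 / 4 : ℝ) ^ pairingNumber Cross (A (C.1 x)) (B (C.1 x)) C.1 else 0 :=
        probD_isSingleComponent_le_expect_pairingNumber x w hAB hsep
    _ = 𝔼 f ∈ matchings (univ : Finset (Fin (2 * n))), if w ≤ arcLength x (f x) then
          (3 / 4 : ℝ) ^ pairingNumber Cross (A (f x)) (B (f x)) f else 0 :=
        expect_chordDiagram_eq fun f => if w ≤ arcLength x (f x) then
          (3 / 4 : ℝ) ^ pairingNumber Cross (A (f x)) (B (f x)) f else 0
    _ = 𝔼 y ∈ univ.erase x, 𝔼 g ∈ matchings (univ \ {x, y}), if w ≤ arcLength x y then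
          (3 / 4 : ℝ) ^ pairingNumber Cross (A y) (B y)
            (Equiv.swap x y * g : Equiv.Perm (Fin (2 * n))) else 0 := by
        rw [expect_matchings_eq (mem_univ x)]
        refine expect_congr rfl fun y _ => expect_congr rfl fun g hg => ?_
        rw [swap_mul_apply_left hg]
    _ ≤ _ := by
        refine expect_le_expect fun y hy => ?_
        have hxy : x ≠ y := (ne_of_mem_erase hy).symm
        split_ifs with hw
        · rw [← hlength y hxy]
          exact expect_matchings_sdiff_pair_le (hAB y hxy) (hunion y hxy) (hcard y hxy)
            (hsep y hxy)
        · rw [expect_const_zero]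

lemma probD_isSingleComponent_le (x : Fin (2 * n)) (w : ℕ) :
    probD n (fun D => w ≤ chordLength D.1 x ∧ IsSingleComponent D x) ≤
      1536 * (95 / 96) ^ w / (2 * n : ℕ) := by
  have hn : (1 : ℝ) ≤ n := by
    have := x.2
    exact_mod_cast (by omega : 1 ≤ n)
  calc _ ≤ 𝔼 y ∈ univ.erase x, if w ≤ arcLength x y then 2 * (95 / 96 : ℝ) ^ arcLength x y else 0 :=
        probD_isSingleComponent_le_expect x w
    _ ≤ 2 * (384 * (95 / 96) ^ w) / (2 * n - 1) := by
        rw [expect_eq_sum_div_card, card_erase_of_mem (mem_univ x), card_fin, ← sum_filter,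
          ← mul_sum, Nat.cast_pred x.pos, Nat.cast_mul, Nat.cast_ofNat]
        gcongr
        · linarith
        · exact sum_arcLength_le x w
    _ ≤ 1536 * (95 / 96) ^ w / (2 * n : ℕ) := by
        push_cast
        rw [div_le_div_iff₀ (by linarith) (by linarith)]
        have : (0 : ℝ) ≤ (95 / 96) ^ w := by positivity
        nlinarith

theorem one_sub_le_probD_not_exists_isSingleComponent (n w : ℕ) :
    1 - 1536 * (95 / 96 : ℝ) ^ w ≤
      probD n fun D => ¬∃ x, w ≤ chordLength D.1 x ∧ IsSingleComponent D x := by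
  refine le_trans ?_ (one_sub_sum_probD_le _)
  gcongr
  calc _ ≤ ∑ _x : Fin (2 * n), 1536 * (95 / 96 : ℝ) ^ w / (2 * n : ℕ) :=
        sum_le_sum fun x _ => probD_isSingleComponent_le x w
    _ ≤ 1536 * (95 / 96) ^ w := by
        rw [sum_const, card_fin, nsmul_eq_mul, mul_div_left_comm]
        exact mul_le_of_le_one_right (by positivity) (div_self_le_one _)

end SingleComponents

theorem stmt16 (ω : ℕ → ℕ) (hω : Filter.Tendsto ω Filter.atTop Filter.atTop) :
    Filter.Tendsto
      (fun n : ℕ => probD n (fun D =>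
        ¬ ∃ x : Fin (2*n), ω n ≤ chordLength D.1 x ∧
          ∀ u : Fin (2*n), u ≠ x → u ≠ D.1.1 x → ¬ MutualReach D x u))
      Filter.atTop (nhds 1) := by
  have hlower : Tendsto (fun n => 1 - 1536 * (95 / 96 : ℝ) ^ ω n) atTop (nhds 1) := by
    have hpow : Tendsto (fun m : ℕ => (95 / 96 : ℝ) ^ m) atTop (nhds 0) :=
      tendsto_pow_atTop_nhds_zero_of_lt_one (by norm_num) (by norm_num)
    simpa using ((hpow.comp hω).const_mul 1536).const_sub 1
  exact tendsto_of_tendsto_of_tendsto_of_le_of_le hlower tendsto_const_nhds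
    (fun n => one_sub_le_probD_not_exists_isSingleComponent n (ω n)) fun n => probD_le_one _
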